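/- For every p > 0 there is a constant C_p > 0 such that for every N ≥ 2, if U is an N × N random unitary matrix distributed according to Haar measure on U(N), then E[ (max_{1 ≤ k ≤ N} |𝒩_{2πk/N} − k|)^{2p} ] ≤ C_p (log N)^{2p}. -/

import Mathlib

open MeasureTheory Real Filter

noncomputable section

/-- The Borel σ-algebra on the unitary group `U(N)`. -/
instance (N : ℕ) : MeasurableSpace (Matrix.unitaryGroup (Fin N) ℂ) := borel _

instance (N : ℕ) : BorelSpace (Matrix.unitaryGroup (Fin N) ℂ) := ⟨rfl⟩

/-- The eigenvalue angles (in `[0, 2π)`, with multiplicity) of a unitary matrix `U`: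
the arguments of the roots of the characteristic polynomial, shifted to lie in `[0, 2π)`. -/
def eigenAngles (N : ℕ) (U : Matrix.unitaryGroup (Fin N) ℂ) : Multiset ℝ :=
  ((U : Matrix (Fin N) (Fin N) ℂ).charpoly.roots).map
    (fun z => if 0 ≤ Complex.arg z then Complex.arg z else Complex.arg z + 2 * π)

open Classical in
/-- `𝒩_A`: the number of eigenvalue angles of `U` lying in the set `A`. -/
def countAngles (N : ℕ) (U : Matrix.unitaryGroup (Fin N) ℂ) (A : Set ℝ) : ℕ :=
  Multiset.card ((eigenAngles N U).filter (· ∈ A))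

/-- `𝒩_θ`: the number of eigenvalue angles of `U` in `[0, θ]`. -/
def countFun (N : ℕ) (U : Matrix.unitaryGroup (Fin N) ℂ) (θ : ℝ) : ℕ :=
  countAngles N U (Set.Icc 0 θ)

/-- The Kolmogorov distance between the empirical spectral measure of `U` and the
uniform measure on the circle: `sup_{0 ≤ θ < 2π} |𝒩_θ/N - θ/(2π)|`. -/
def dK (N : ℕ) (U : Matrix.unitaryGroup (Fin N) ℂ) : ℝ :=
  ⨆ θ : Set.Ico (0:ℝ) (2 * π), |(countFun N U θ : ℝ) / N - (θ : ℝ) / (2 * π)|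

/-- `max_{1 ≤ k ≤ N} |𝒩_{2πk/N} - k|`. -/
def maxDev (N : ℕ) (U : Matrix.unitaryGroup (Fin N) ℂ) : ℝ :=
  ⨆ k : (Finset.Icc 1 N : Finset ℕ), |(countFun N U (2 * π * (k : ℕ) / N) : ℝ) - ((k : ℕ) : ℝ)|

end

/-!
For `U` Haar distributed on `U(N)`, let `phase U = Im log det (1 - U)`, the sum of `arg (1 - z)`
over the eigenvalues `z`. As `U` is rotated to `e^{-iθ} U`, each term decreases linearly in `θ`
except for a jump by `π` when an eigenvalue passes `1`, so
`phase (e^{-iθ} U) - phase U = π 𝒩_θ - N θ / 2`,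
and the deviation `|𝒩_{2πk/N} - k|` is controlled by two phases of Haar unitaries.

The exponential moments of the phase are computed by induction on the dimension. A complex
reflection decomposes `U = H (1 ⊕ W)` with `H` and `U` sharing their first column, and almost
surely `phase U = phase W + arg (1 - U₀₀)`. By invariance of Haar measure `E exp (t phase)` is
therefore the product over `n ≤ N` of `E exp (t arg (1 - U₀₀))` on `U(n)`. Since `E U₀₀ = 0` and
`E |U₀₀|² = 1 / n`, each factor is `1 + O(1 / n)`, and the product is polynomial in `N`. A union
bound over `k` gives `E exp (max_k |𝒩_{2πk/N} - k|) ≤ N ^ O(1)`, which bounds all moments.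
-/

section CompactGroup

variable {G : Type*} [Group G] [TopologicalSpace G] [IsTopologicalGroup G] [CompactSpace G]
  [MeasurableSpace G] [BorelSpace G]

theorem isMulRightInvariant_of_compactSpace (μ : Measure G) [μ.IsHaarMeasure]
    [IsProbabilityMeasure μ] : μ.IsMulRightInvariant where
  map_mul_right_eq_self g := by
    have : IsProbabilityMeasure (μ.map (· * g)) :=
      Measure.isProbabilityMeasure_map (by fun_prop)
    exact Measure.isHaarMeasure_eq_of_isProbabilityMeasure _ _

theorem exists_isHaarMeasure_isProbabilityMeasure :
    ∃ μ : Measure G, μ.IsHaarMeasure ∧ IsProbabilityMeasure μ :=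
  ⟨Measure.haarMeasure ⊤, inferInstance, ⟨by
    simpa using Measure.haarMeasure_self (K₀ := (⊤ : TopologicalSpace.PositiveCompacts G))⟩⟩

end CompactGroup

section UnitaryGroup

open Matrix

variable {n : Type*} [Fintype n] [DecidableEq n]

instance : SecondCountableTopology (unitaryGroup n ℂ) :=
  have : SecondCountableTopology (Matrix n n ℂ) :=
    inferInstanceAs (SecondCountableTopology (n → n → ℂ))
  TopologicalSpace.Subtype.secondCountableTopology _

instance : CompactSpace (unitaryGroup n ℂ) := by
  have isCompact_unitBox : IsCompact
      (Set.univ.pi fun _ : n => Set.univ.pi fun _ : n => Metric.closedBall (0 : ℂ) 1) :=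
    isCompact_univ_pi fun _ => isCompact_univ_pi fun _ => isCompact_closedBall _ _
  have isClosed_unitaryGroup : IsClosed (unitaryGroup n ℂ : Set (Matrix n n ℂ)) := by
    simp only [unitaryGroup, unitary, Submonoid.coe_set_mk, Subsemigroup.coe_set_mk, Set.ofPred_and]
    exact (isClosed_eq (by fun_prop) (by fun_prop)).inter
      (isClosed_eq (by fun_prop) (by fun_prop))
  exact isCompact_iff_compactSpace.mp <|
    isCompact_unitBox.of_isClosed_subset isClosed_unitaryGroup fun A hA i _ j _ => by
      simpa using entry_norm_bound_of_unitary hA i j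

end UnitaryGroup

section Eigenvalues

open Matrix Polynomial

variable {n : Type*} [Fintype n] [DecidableEq n]

section Field
variable {K : Type*} [Field K]

theorem comp_charpoly_smul [Infinite K] (A : Matrix n n K) (c : K) :
    (c • A).charpoly.comp (C c * X) = C (c ^ Fintype.card n) * A.charpoly := by
  refine Polynomial.funext fun t => ?_
  have scalar_mul_sub : scalar n (c * t) - c • A = c • (scalar n t - A) := by
    rw [smul_sub, ← smul_eq_mul, scalar_apply, scalar_apply, ← smul_one_eq_diagonal,
      ← smul_one_eq_diagonal, smul_assoc]
  rw [eval_comp, eval_mul, eval_mul, eval_C, eval_X, eval_C, eval_charpoly, eval_charpoly,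
    scalar_mul_sub, det_smul]

variable [IsAlgClosed K]

theorem card_roots_charpoly (A : Matrix n n K) :
    A.charpoly.roots.card = Fintype.card n := by
  rw [← (IsAlgClosed.splits A.charpoly).natDegree_eq_card_roots, charpoly_natDegree_eq_dim]

theorem roots_charpoly_smul (c : K) (A : Matrix n n K) :
    (c • A).charpoly.roots = A.charpoly.roots.map (c * ·) := by
  rcases eq_or_ne c 0 with rfl | hc
  · simp [card_roots_charpoly, Matrix.charpoly_zero, ← Multiset.nsmul_singleton]
  · have h := (c • A).charpoly.map_roots_comp_C_mul_X_add_C c 0 hc.isUnit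
    rw [C_0, add_zero, comp_charpoly_smul, roots_C_mul _ (pow_ne_zero _ hc)] at h
    simpa only [add_zero] using h.symm

theorem det_one_sub_eq_prod_roots_charpoly (A : Matrix n n K) :
    (1 - A).det = (A.charpoly.roots.map (1 - ·)).prod := by
  rw [← (IsAlgClosed.splits A.charpoly).eval_eq_prod_roots_of_monic A.charpoly_monic,
    eval_charpoly, map_one]

end Field

open scoped Matrix.Norms.L2Operator in
theorem norm_eq_one_of_mem_roots_charpoly {U : Matrix n n ℂ} (hU : U ∈ unitaryGroup n ℂ) {z : ℂ}
    (hz : z ∈ U.charpoly.roots) : ‖z‖ = 1 :=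
  spectrum.norm_eq_one_of_unitary (𝕜 := ℂ) hU <|
    mem_spectrum_iff_isRoot_charpoly.mpr (isRoot_of_mem_roots hz)

end Eigenvalues

theorem re_lt_one_of_norm_le_one {z : ℂ} (hz : ‖z‖ ≤ 1) (hz1 : z ≠ 1) : z.re < 1 := by
  refine ((Complex.re_le_norm z).trans hz).lt_of_ne fun hre => hz1 (Complex.ext hre ?_)
  refine Complex.abs_re_eq_norm.mp (le_antisymm (Complex.abs_re_le_norm z) ?_)
  rwa [hre, abs_one]

section ExpLift

theorem eqOn_of_cexp_comp_eqOn {X : Type*} [TopologicalSpace X] {s : Set X} (hs : IsPreconnected s)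
    {f g : X → ℂ} (hf : ContinuousOn f s) (hg : ContinuousOn g s)
    (hexp : s.EqOn (fun x => Complex.exp (f x)) fun x => Complex.exp (g x)) {a : X} (ha : a ∈ s)
    (hfg : f a = g a) : s.EqOn f g :=
  Complex.isCoveringMap_exp.eqOn_of_comp_eqOn hs hf hg (fun _ hx => Subtype.ext (hexp hx)) ha hfg

theorem continuous_of_continuous_cexp_comp {X : Type*} [TopologicalSpace X]
    {f : unitInterval × X → ℂ} (hexp : Continuous fun q => Complex.exp (f q))
    (hzero : Continuous fun x => f (0, x)) (hpath : ∀ x, Continuous fun t => f (t, x)) :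
    Continuous f :=
  Complex.isCoveringMap_exp.isLocalHomeomorph.continuous_lift
    Complex.isCoveringMap_exp.isSeparatedMap
    ⟨fun q => ⟨Complex.exp (f q), Complex.exp_ne_zero _⟩, hexp.subtype_mk _⟩ rfl hzero hpath

end ExpLift

noncomputable section Phase

open Matrix

variable {n : Type*} [Fintype n] [DecidableEq n]

/-- The branch `∑ log (1 - z)` of `log det (1 - A)`, the sum running over the eigenvalues of `A`.
Eigenvalues equal to `1` contribute the junk value `log 0 = 0`. -/
def logDetOneSub (A : Matrix n n ℂ) : ℂ :=
  (A.charpoly.roots.map fun z => Complex.log (1 - z)).sum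

/-- The phase `∑ arg (1 - z)` of `det (1 - A)`, the sum running over the eigenvalues of `A`. -/
def phase (A : Matrix n n ℂ) : ℝ :=
  (logDetOneSub A).im

theorem logDetOneSub_smul (c : ℂ) (A : Matrix n n ℂ) :
    logDetOneSub (c • A) = (A.charpoly.roots.map fun z => Complex.log (1 - c * z)).sum := by
  rw [logDetOneSub, roots_charpoly_smul, Multiset.map_map, Function.comp_def]

theorem logDetOneSub_zero : logDetOneSub (0 : Matrix n n ℂ) = 0 := by
  simpa using logDetOneSub_smul 0 (0 : Matrix n n ℂ)

theorem phase_smul (c : ℂ) (A : Matrix n n ℂ) :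
    phase (c • A) = (A.charpoly.roots.map fun z => Complex.arg (1 - c * z)).sum := by
  have := map_multiset_sum Complex.imAddGroupHom
    (A.charpoly.roots.map fun z => Complex.log (1 - c * z))
  simpa [phase, logDetOneSub_smul, Multiset.map_map, Complex.log_im] using this

theorem phase_eq_sum_arg (A : Matrix n n ℂ) :
    phase A = (A.charpoly.roots.map fun z => Complex.arg (1 - z)).sum := by
  simpa using phase_smul 1 A

theorem exp_logDetOneSub {A : Matrix n n ℂ} (hA : (1 - A).det ≠ 0) :
    Complex.exp (logDetOneSub A) = (1 - A).det := by
  rw [det_one_sub_eq_prod_roots_charpoly] at hA ⊢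
  rw [logDetOneSub, Complex.exp_multiset_sum, Multiset.map_map]
  refine congrArg _ (Multiset.map_congr rfl fun z hz => Complex.exp_log fun h => hA ?_)
  exact Multiset.prod_eq_zero (h ▸ Multiset.mem_map_of_mem (1 - ·) hz)

variable {U : Matrix n n ℂ} (hU : U ∈ unitaryGroup n ℂ)
include hU

theorem one_sub_mul_mem_slitPlane_of_mem_roots_charpoly {c z : ℂ} (hc : ‖c‖ < 1)
    (hz : z ∈ U.charpoly.roots) : 1 - c * z ∈ Complex.slitPlane := by
  rw [sub_eq_add_neg]
  refine Complex.mem_slitPlane_of_norm_lt_one ?_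
  rwa [norm_neg, norm_mul, norm_eq_one_of_mem_roots_charpoly hU hz, mul_one]

theorem det_one_sub_smul_ne_zero {c : ℂ} (hc : ‖c‖ < 1) : (1 - c • U).det ≠ 0 := by
  rw [det_one_sub_eq_prod_roots_charpoly, roots_charpoly_smul, Multiset.map_map]
  refine Multiset.prod_ne_zero fun h => ?_
  obtain ⟨z, hz, hz0⟩ := Multiset.mem_map.mp h
  exact Complex.slitPlane_ne_zero
    (one_sub_mul_mem_slitPlane_of_mem_roots_charpoly hU hc hz) hz0

theorem continuousOn_logDetOneSub_smul :
    ContinuousOn (fun c : ℂ => logDetOneSub (c • U)) (Metric.ball 0 1) := by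
  intro c hc
  simp only [logDetOneSub_smul]
  refine ContinuousAt.continuousWithinAt (tendsto_multiset_sum _ fun z hz => ?_)
  have hslit := one_sub_mul_mem_slitPlane_of_mem_roots_charpoly hU (mem_ball_zero_iff.mp hc) hz
  exact ContinuousAt.clog (by fun_prop) hslit

theorem tendsto_phase_smul :
    Tendsto (fun r : ℝ => phase ((r : ℂ) • U)) (nhdsWithin 1 (Set.Iio 1)) (nhds (phase U)) := by
  simp only [phase_smul, phase_eq_sum_arg U]
  refine tendsto_multiset_sum _ fun z hz => ?_
  rcases eq_or_ne z 1 with rfl | hz1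
  · refine Tendsto.congr' ?_ tendsto_const_nhds
    filter_upwards [self_mem_nhdsWithin] with r (hr : r < 1)
    rw [mul_one, sub_self, Complex.arg_zero, ← Complex.ofReal_one, ← Complex.ofReal_sub,
      Complex.arg_ofReal_of_nonneg (sub_nonneg.mpr hr.le)]
  · have hre : z.re < 1 := re_lt_one_of_norm_le_one (norm_eq_one_of_mem_roots_charpoly hU hz).le hz1
    have harg : ContinuousAt Complex.arg (1 - ((1 : ℝ) : ℂ) * z) :=
      Complex.continuousAt_arg (Or.inl (by simpa using hre))
    have hlin : ContinuousAt (fun r : ℝ => 1 - (r : ℂ) * z) 1 := by fun_prop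
    simpa [Function.comp_def] using
      (ContinuousAt.comp (f := fun r : ℝ => 1 - (r : ℂ) * z) harg hlin).mono_left
        nhdsWithin_le_nhds

omit hU

theorem continuous_logDetOneSub_smul {c : ℂ} (hc : ‖c‖ < 1) :
    Continuous fun U : unitaryGroup n ℂ => logDetOneSub (c • (U : Matrix n n ℂ)) := by
  let f : unitInterval × unitaryGroup n ℂ → ℂ := fun q =>
    logDetOneSub (((q.1 : ℝ) * c : ℂ) • (q.2 : Matrix n n ℂ))
  have norm_mul_lt (t : unitInterval) : ‖((t : ℝ) : ℂ) * c‖ < 1 := by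
    rw [norm_mul, Complex.norm_of_nonneg t.2.1]
    exact (mul_le_of_le_one_left (norm_nonneg c) t.2.2).trans_lt hc
  have hf : Continuous f := by
    refine continuous_of_continuous_cexp_comp ?_ ?_ fun U => ?_
    · simp only [f, exp_logDetOneSub (det_one_sub_smul_ne_zero (Subtype.prop _) (norm_mul_lt _))]
      fun_prop
    · simpa [f, logDetOneSub_zero] using continuous_const
    · exact (continuousOn_logDetOneSub_smul U.2).comp_continuous (by fun_prop) fun t =>
        mem_ball_zero_iff.mpr (norm_mul_lt t)
  simpa [f, Function.comp_def] using hf.comp (Continuous.prodMk_right (1 : unitInterval))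

theorem measurable_phase {N : ℕ} :
    Measurable fun U : unitaryGroup (Fin N) ℂ => phase (U : Matrix (Fin N) (Fin N) ℂ) := by
  obtain ⟨r, -, hr, hr_tendsto⟩ := exists_seq_strictMono_tendsto' (zero_lt_one (α := ℝ))
  refine measurable_of_tendsto_metrizable
    (f := fun k (U : unitaryGroup (Fin N) ℂ) => phase ((r k : ℂ) • U.1)) (fun k => ?_) ?_
  · have norm_lt : ‖(r k : ℂ)‖ < 1 := by
      rw [Complex.norm_of_nonneg (hr k).1.le]
      exact (hr k).2
    exact (Complex.continuous_im.comp (continuous_logDetOneSub_smul norm_lt)).measurable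
  · exact tendsto_pi_nhds.mpr fun U => (tendsto_phase_smul U.2).comp <|
      tendsto_nhdsWithin_iff.mpr ⟨hr_tendsto, Eventually.of_forall fun k => (hr k).2⟩

end Phase

noncomputable section ComplexReflection

open Matrix

variable {n : Type*} [Fintype n]

theorem re_star_dotProduct_self_pos {y : n → ℂ} (hy : y ≠ 0) : 0 < (star y ⬝ᵥ y).re := by
  open scoped ComplexOrder in
  exact (Complex.lt_def.mp (dotProduct_star_self_pos_iff.mpr hy)).1

variable [DecidableEq n]

/-- The complex reflection `1 - c⁻¹ x x*`. It is unitary when `x* x = c + c̄`, in which case it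
fixes `xᗮ` and multiplies `x` by `-c̄ / c`. -/
def complexReflection (c : ℂ) (x : n → ℂ) : Matrix n n ℂ :=
  1 - c⁻¹ • vecMulVec x (star x)

theorem complexReflection_mem_unitaryGroup {c : ℂ} {x : n → ℂ} (hc : c ≠ 0)
    (hx : star x ⬝ᵥ x = c + star c) : complexReflection c x ∈ unitaryGroup n ℂ := by
  have hc' : star c ≠ 0 := star_ne_zero.mpr hc
  have coeff_eq_zero : -(star c)⁻¹ - c⁻¹ + c⁻¹ * (star c)⁻¹ * (star x ⬝ᵥ x) = 0 := by
    rw [hx]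
    field_simp
    ring
  have star_vecMulVec : star (vecMulVec x (star x)) = vecMulVec x (star x) := by
    rw [star_eq_conjTranspose, conjTranspose_vecMulVec, star_star]
  rw [mem_unitaryGroup_iff, complexReflection, star_sub, star_one, star_smul, star_vecMulVec,
    star_inv₀, mul_sub, mul_one, sub_mul, one_mul, smul_mul_smul_comm, vecMulVec_mul_vecMulVec,
    vecMulVec_smul]
  linear_combination (norm := module) coeff_eq_zero • vecMulVec x (star x)

theorem complexReflection_mul (c : ℂ) (x : n → ℂ) (M : Matrix n n ℂ) :
    complexReflection c x * M = M - c⁻¹ • vecMulVec x (star x ᵥ* M) := by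
  rw [complexReflection, sub_mul, one_mul, smul_mul_assoc, vecMulVec_mul]

theorem det_one_sub_complexReflection_mul (c : ℂ) {x y : n → ℂ} {M : Matrix n n ℂ}
    (hy : (1 - M) *ᵥ y = x) :
    (1 - complexReflection c x * M).det =
      (1 - M).det * (1 + c⁻¹ * (star x ⬝ᵥ M *ᵥ y)) := by
  have rank_one_factor : 1 - complexReflection c x * M =
      (1 - M) * (1 + vecMulVec y (c⁻¹ • (star x ᵥ* M))) := by
    rw [complexReflection_mul, mul_add, mul_one, mul_vecMulVec, hy, vecMulVec_smul]
    abel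
  rw [rank_one_factor, det_mul, vecMulVec_eq Unit, det_one_add_replicateCol_mul_replicateRow,
    smul_dotProduct, dotProduct_mulVec, smul_eq_mul]

variable {W : Matrix n n ℂ} (hW : W ∈ unitaryGroup n ℂ)
include hW

theorem star_mulVec_dotProduct_mulVec (y : n → ℂ) :
    star (W *ᵥ y) ⬝ᵥ W *ᵥ y = star y ⬝ᵥ y := by
  rw [star_mulVec, dotProduct_mulVec, vecMul_vecMul, ← star_eq_conjTranspose,
    mem_unitaryGroup_iff'.mp hW, vecMul_one]

theorem re_star_sub_dotProduct_pos {s : ℂ} (hs : ‖s‖ < 1) {y : n → ℂ} (hy : y ≠ 0) :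
    0 < (star (y - s • W *ᵥ y) ⬝ᵥ (y - s • W *ᵥ y)).re / 2 +
      (star (y - s • W *ᵥ y) ⬝ᵥ (s • W *ᵥ y)).re := by
  have norm_sq_smul : (star (s • W *ᵥ y) ⬝ᵥ (s • W *ᵥ y)).re = ‖s‖ ^ 2 * (star y ⬝ᵥ y).re := by
    rw [star_smul, smul_dotProduct, dotProduct_smul, star_mulVec_dotProduct_mulVec hW, smul_smul,
      smul_eq_mul, Complex.star_def, Complex.conj_mul', ← Complex.ofReal_pow,
      Complex.re_ofReal_mul]
  have re_symm : (star (s • W *ᵥ y) ⬝ᵥ y).re = (star y ⬝ᵥ (s • W *ᵥ y)).re := by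
    rw [star_dotProduct, Complex.star_def, Complex.conj_re]
  have norm_sq_lt : ‖s‖ ^ 2 * (star y ⬝ᵥ y).re < (star y ⬝ᵥ y).re :=
    mul_lt_of_lt_one_left (re_star_dotProduct_self_pos hy)
      (pow_lt_one₀ (norm_nonneg s) hs two_ne_zero)
  simp only [star_sub, sub_dotProduct, dotProduct_sub, Complex.sub_re]
  linarith

variable {c : ℂ} (hc : 0 < c.re) {x : n → ℂ} (hx : star x ⬝ᵥ x = c + star c)
include hc hx

theorem re_mul_det_complexReflection_mul_div_det_pos {s : ℂ} (hs : ‖s‖ < 1) :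
    0 < (c * (1 - s • (complexReflection c x * W)).det / (1 - s • W).det).re := by
  have hc0 := Complex.ne_zero_of_re_pos hc
  have hdet := det_one_sub_smul_ne_zero hW hs
  obtain ⟨y, hy⟩ : ∃ y, (1 - s • W) *ᵥ y = x :=
    ⟨(1 - s • W)⁻¹ *ᵥ x, by rw [mulVec_mulVec, mul_nonsing_inv _ hdet.isUnit, one_mulVec]⟩
  have hxy : x = y - s • W *ᵥ y := by rw [← hy, sub_mulVec, one_mulVec, smul_mulVec]
  have hx_re : (star x ⬝ᵥ x).re = 2 * c.re := by
    rw [hx, Complex.add_re, Complex.star_def, Complex.conj_re, two_mul]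
  have hy0 : y ≠ 0 := by
    rintro rfl
    have : c.re = 0 := by simpa [hxy] using hx_re
    exact hc.ne' this
  have ratio_eq : c * (1 - s • (complexReflection c x * W)).det / (1 - s • W).det =
      c + star x ⬝ᵥ (s • W *ᵥ y) := by
    rw [← mul_smul_comm, det_one_sub_complexReflection_mul c hy, smul_mulVec]
    field_simp
  have := re_star_sub_dotProduct_pos hW hs hy0
  rw [← hxy, hx_re] at this
  rw [ratio_eq, Complex.add_re]
  linarith

theorem logDetOneSub_smul_complexReflection_mul {s : ℂ} (hs : ‖s‖ < 1) :
    logDetOneSub (s • (complexReflection c x * W)) = logDetOneSub (s • W) +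
      Complex.log (c * (1 - s • (complexReflection c x * W)).det / (1 - s • W).det) -
      Complex.log c := by
  have hc0 := Complex.ne_zero_of_re_pos hc
  have hU : complexReflection c x * W ∈ unitaryGroup n ℂ :=
    mul_mem (complexReflection_mem_unitaryGroup hc0 hx) hW
  have hslit {s : ℂ} (hs : s ∈ Metric.ball 0 1) :
      c * (1 - s • (complexReflection c x * W)).det / (1 - s • W).det ∈ Complex.slitPlane :=
    Or.inl <| re_mul_det_complexReflection_mul_div_det_pos hW hc hx (mem_ball_zero_iff.mp hs)
  have hdet {s : ℂ} (hs : s ∈ Metric.ball 0 1) : (1 - s • W).det ≠ 0 :=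
    det_one_sub_smul_ne_zero hW (mem_ball_zero_iff.mp hs)
  refine eqOn_of_cexp_comp_eqOn (convex_ball (0 : ℂ) 1).isPreconnected
    (continuousOn_logDetOneSub_smul hU) (g := fun s => logDetOneSub (s • W) +
      Complex.log (c * (1 - s • (complexReflection c x * W)).det / (1 - s • W).det) -
      Complex.log c) ?_ (fun s hs => ?_) (Metric.mem_ball_self one_pos) ?_
    (mem_ball_zero_iff.mpr hs)
  · refine ((continuousOn_logDetOneSub_smul hW).add (ContinuousOn.clog ?_ fun s => hslit)).sub
      continuousOn_const
    exact ContinuousOn.div (by fun_prop) (by fun_prop) fun s => hdet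
  · have hs' := mem_ball_zero_iff.mp hs
    have hdetW := hdet hs
    simp only [Complex.exp_sub, Complex.exp_add,
      Complex.exp_log (Complex.slitPlane_ne_zero (hslit hs)), Complex.exp_log hc0,
      exp_logDetOneSub (det_one_sub_smul_ne_zero hU hs'), exp_logDetOneSub hdetW]
    field_simp
  · simp [logDetOneSub_zero]

end ComplexReflection

noncomputable section OneBlock

open Matrix Polynomial

variable {n : ℕ} {R : Type*}

/-- The index equivalence underlying `oneBlock`, sending `0` to the summand `Unit`. -/
def finSuccEquivSumUnit (n : ℕ) : Fin (n + 1) ≃ Fin n ⊕ Unit :=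
  (finSuccEquiv n).trans (Equiv.optionEquivSumPUnit.{0} (Fin n))

/-- The block diagonal matrix `1 ⊕ V`, with the `1` at index `0`. -/
def oneBlock [Zero R] [One R] (V : Matrix (Fin n) (Fin n) R) :
    Matrix (Fin (n + 1)) (Fin (n + 1)) R :=
  (fromBlocks V 0 0 1).submatrix (finSuccEquivSumUnit n) (finSuccEquivSumUnit n)

section Entries

variable [Zero R] [One R] (V : Matrix (Fin n) (Fin n) R)

@[simp] theorem oneBlock_zero_zero : oneBlock V 0 0 = 1 := rfl

@[simp] theorem oneBlock_zero_succ (j : Fin n) : oneBlock V 0 j.succ = 0 := rfl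

@[simp] theorem oneBlock_succ_zero (i : Fin n) : oneBlock V i.succ 0 = 0 := rfl

@[simp] theorem oneBlock_succ_succ (i j : Fin n) : oneBlock V i.succ j.succ = V i j := rfl

theorem oneBlock_injective :
    Function.Injective (oneBlock : Matrix (Fin n) (Fin n) R → _) := fun V W h => by
  ext i j
  simpa using congrFun₂ h i.succ j.succ

theorem oneBlock_submatrix_succ {A : Matrix (Fin (n + 1)) (Fin (n + 1)) R}
    (h_col : A.col 0 = Pi.single 0 1) (h_row : A.row 0 = Pi.single 0 1) :
    oneBlock (A.submatrix Fin.succ Fin.succ) = A := by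
  ext i j
  cases i using Fin.cases with
  | zero => cases j using Fin.cases <;> simp [show A 0 _ = _ from congrFun h_row _]
  | succ i => cases j using Fin.cases <;> simp [show A _ 0 = _ from congrFun h_col _]

end Entries

theorem oneBlock_one [Zero R] [One R] : oneBlock (1 : Matrix (Fin n) (Fin n) R) = 1 := by
  rw [oneBlock, fromBlocks_one, submatrix_one_equiv]

theorem oneBlock_mul [NonAssocSemiring R] (V W : Matrix (Fin n) (Fin n) R) :
    oneBlock (V * W) = oneBlock V * oneBlock W := by
  rw [oneBlock, oneBlock, oneBlock, submatrix_mul_equiv, fromBlocks_multiply]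
  simp

theorem oneBlock_star [NonAssocSemiring R] [StarRing R] (V : Matrix (Fin n) (Fin n) R) :
    oneBlock (star V) = star (oneBlock V) := by
  simp only [oneBlock, star_eq_conjTranspose, conjTranspose_submatrix, fromBlocks_conjTranspose,
    conjTranspose_zero, conjTranspose_one]

theorem oneBlock_mem_unitaryGroup_iff [CommRing R] [StarRing R] {V : Matrix (Fin n) (Fin n) R} :
    oneBlock V ∈ unitaryGroup (Fin (n + 1)) R ↔ V ∈ unitaryGroup (Fin n) R := by
  rw [mem_unitaryGroup_iff, mem_unitaryGroup_iff, ← oneBlock_star, ← oneBlock_mul, ← oneBlock_one,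
    oneBlock_injective.eq_iff]

theorem charpoly_oneBlock [CommRing R] (V : Matrix (Fin n) (Fin n) R) :
    (oneBlock V).charpoly = (X - 1) * V.charpoly := by
  rw [oneBlock, ← Equiv.symm_symm (finSuccEquivSumUnit n), ← reindex_apply, charpoly_reindex,
    charpoly_fromBlocks_zero₁₂, charpoly_one, Fintype.card_punit, pow_one, mul_comm]

theorem roots_charpoly_oneBlock [CommRing R] [IsDomain R] (V : Matrix (Fin n) (Fin n) R) :
    (oneBlock V).charpoly.roots = 1 ::ₘ V.charpoly.roots := by
  have hX : (X - 1 : R[X]) ≠ 0 := X_sub_C_ne_zero 1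
  rw [charpoly_oneBlock, roots_mul (mul_ne_zero hX V.charpoly_monic.ne_zero), ← C_1,
    roots_X_sub_C, Multiset.singleton_add]

theorem exists_oneBlock_eq_of_col_zero [CommRing R] [StarRing R]
    {A : Matrix (Fin (n + 1)) (Fin (n + 1)) R} (hA : A ∈ unitaryGroup (Fin (n + 1)) R)
    (h_col : A.col 0 = Pi.single 0 1) : ∃ W ∈ unitaryGroup (Fin n) R, oneBlock W = A := by
  have h_row : A.row 0 = Pi.single 0 1 := by
    calc A.row 0 = star (A.col 0) ᵥ* A := by
          rw [h_col, Pi.star_single, star_one, single_one_vecMul]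
      _ = (star A * A).row 0 := rfl
      _ = Pi.single 0 1 := by
          rw [mem_unitaryGroup_iff'.mp hA]
          exact funext fun j => one_eq_pi_single
  have h_block := oneBlock_submatrix_succ h_col h_row
  exact ⟨_, oneBlock_mem_unitaryGroup_iff.mp (h_block ▸ hA), h_block⟩

theorem det_one_sub_of_eq_oneBlock_sub_vecMulVec [CommRing R]
    {U : Matrix (Fin (n + 1)) (Fin (n + 1)) R} {W : Matrix (Fin n) (Fin n) R}
    (v : Fin (n + 1) → R) (hU : U = oneBlock W - vecMulVec ((1 - U).col 0) v) :
    (1 - U).det = (1 - U 0 0) * (1 - W).det := by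
  set M := (1 - oneBlock W).updateCol 0 ((1 - U).col 0)
  have column_operations : (1 - U).det = M.det := by
    rw [← det_transpose, ← det_transpose M]
    refine det_eq_of_forall_row_eq_smul_add_const (Function.update v 0 0) 0 (by simp) fun j i => ?_
    cases j using Fin.cases with
    | zero => simp [M]
    | succ j =>
      have hij := congrFun₂ hU i j.succ
      simp only [Matrix.sub_apply, vecMulVec_apply, col_apply] at hij
      simp only [M, transpose_apply, Matrix.sub_apply, updateCol_self, col_apply,
        updateCol_ne (Fin.succ_ne_zero j), Function.update_of_ne (Fin.succ_ne_zero j)]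
      linear_combination -hij
  have row_zero (j : Fin n) : M 0 j.succ = 0 := by simp [M, (Fin.succ_ne_zero j).symm]
  have minor : M.submatrix Fin.succ (Fin.succAbove 0) = 1 - W := by
    ext i j
    simp [M, one_apply]
  rw [column_operations, det_succ_row_zero, Fin.sum_univ_succ, minor]
  simp only [row_zero, mul_zero, zero_mul, Finset.sum_const_zero, add_zero]
  simp [M]

theorem continuous_oneBlock [Zero R] [One R] [TopologicalSpace R] :
    Continuous (oneBlock : Matrix (Fin n) (Fin n) R → _) := by
  unfold oneBlock
  fun_prop

end OneBlock

section ReflectionDecomposition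

open Matrix

section Column

variable {n : Type*} [DecidableEq n]

theorem complexReflection_col {c : ℂ} {x : n → ℂ} {i : n} (hc : c ≠ 0) (hx : star (x i) = c) :
    (complexReflection c x).col i = Pi.single i 1 - x := by
  ext j
  simp only [complexReflection, col_apply, Matrix.sub_apply, Matrix.smul_apply, vecMulVec_apply,
    Pi.star_apply, hx, Pi.sub_apply, one_apply, Pi.single_apply, smul_eq_mul]
  field_simp

variable [Fintype n] {U : Matrix n n ℂ} (hU : U ∈ unitaryGroup n ℂ) (i : n)
include hU

theorem star_dotProduct_one_sub_col :
    star ((1 - U).col i) ⬝ᵥ (1 - U).col i = 1 - star (U i i) + star (1 - star (U i i)) := by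
  have gram : star (1 - U) * (1 - U) = 1 - star U + (1 - U) := by
    rw [star_sub, star_one, sub_mul, mul_sub, mul_sub, mem_unitaryGroup_iff'.mp hU]
    simp only [one_mul, mul_one]
    abel
  calc star ((1 - U).col i) ⬝ᵥ (1 - U).col i = (star (1 - U) * (1 - U)) i i := rfl
    _ = 1 - star (U i i) + star (1 - star (U i i)) := by
      rw [gram]
      simp [star_apply]

variable {i} (hi : U i i ≠ 1)
include hi

theorem re_one_sub_star_apply_pos : 0 < (1 - star (U i i)).re := by
  simpa using re_lt_one_of_norm_le_one (entry_norm_bound_of_unitary hU i i) hi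

theorem exists_complexReflection_mul_eq :
    ∃ A ∈ unitaryGroup n ℂ, A.col i = Pi.single i 1 ∧
      complexReflection (1 - star (U i i)) ((1 - U).col i) * A = U := by
  set H := complexReflection (1 - star (U i i)) ((1 - U).col i)
  have hc := Complex.ne_zero_of_re_pos (re_one_sub_star_apply_pos hU hi)
  have hH : H ∈ unitaryGroup n ℂ :=
    complexReflection_mem_unitaryGroup hc (star_dotProduct_one_sub_col hU i)
  have H_col : H.col i = U.col i := by
    rw [complexReflection_col hc (by simp)]
    ext j
    simp [one_apply, Pi.single_apply]
  refine ⟨star H * U, mul_mem (Unitary.star_mem hH) hU, ?_, ?_⟩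
  · calc (star H * U).col i = star H *ᵥ U.col i := rfl
      _ = (star H * H).col i := by rw [← H_col]; rfl
      _ = Pi.single i 1 := by
        rw [mem_unitaryGroup_iff'.mp hH]
        ext j
        simp [one_apply, Pi.single_apply]
  · rw [← mul_assoc, mem_unitaryGroup_iff.mp hH, one_mul]

end Column

variable {n : ℕ}

theorem phase_smul_oneBlock {r : ℝ} (hr : r ≤ 1) (V : Matrix (Fin n) (Fin n) ℂ) :
    phase ((r : ℂ) • oneBlock V) = phase ((r : ℂ) • V) := by
  have arg_eq_zero : Complex.arg (1 - (r : ℂ) * 1) = 0 := by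
    rw [mul_one, ← Complex.ofReal_one, ← Complex.ofReal_sub,
      Complex.arg_ofReal_of_nonneg (sub_nonneg.mpr hr)]
  rw [phase_smul, phase_smul, roots_charpoly_oneBlock, Multiset.map_cons, Multiset.sum_cons,
    arg_eq_zero, zero_add]

theorem det_one_sub_smul_oneBlock (c : ℂ) (V : Matrix (Fin n) (Fin n) ℂ) :
    (1 - c • oneBlock V).det = (1 - c) * (1 - c • V).det := by
  simp only [det_one_sub_eq_prod_roots_charpoly, roots_charpoly_smul, roots_charpoly_oneBlock,
    Multiset.map_cons, Multiset.prod_cons, mul_one]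

variable {W : Matrix (Fin n) (Fin n) ℂ} (hW : W ∈ unitaryGroup (Fin n) ℂ)
include hW

theorem phase_smul_complexReflection_mul_oneBlock {c : ℂ} (hc : 0 < c.re) {x : Fin (n + 1) → ℂ}
    (hx : star x ⬝ᵥ x = c + star c) {r : ℝ} (hr : |r| < 1) :
    phase ((r : ℂ) • (complexReflection c x * oneBlock W)) = phase ((r : ℂ) • W) +
      Complex.arg (c * (1 - (r : ℂ) • (complexReflection c x * oneBlock W)).det /
        (1 - (r : ℂ) • W).det) - Complex.arg c := by
  have hr' : ‖(r : ℂ)‖ < 1 := by simpa using hr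
  have r_lt : r < 1 := (le_abs_self r).trans_lt hr
  have h := congrArg Complex.im (logDetOneSub_smul_complexReflection_mul
    (oneBlock_mem_unitaryGroup_iff.mpr hW) hc hx hr')
  rw [Complex.sub_im, Complex.add_im, Complex.log_im, Complex.log_im] at h
  change phase _ = phase _ + _ - _ at h
  rw [h, phase_smul_oneBlock r_lt.le]
  congr 2
  rw [det_one_sub_smul_oneBlock, ← Complex.arg_real_mul _ (sub_pos.mpr r_lt)]
  have : (1 - r : ℂ) ≠ 0 := by exact_mod_cast (sub_pos.mpr r_lt).ne'
  push_cast
  field_simp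

theorem phase_eq_phase_add_arg {U : Matrix (Fin (n + 1)) (Fin (n + 1)) ℂ}
    (hU : U ∈ unitaryGroup (Fin (n + 1)) ℂ) (h00 : U 0 0 ≠ 1) (hdet : (1 - W).det ≠ 0)
    (hUW : complexReflection (1 - star (U 0 0)) ((1 - U).col 0) * oneBlock W = U) :
    phase U = phase W + Complex.arg (1 - U 0 0) := by
  set c := 1 - star (U 0 0)
  have hc := re_one_sub_star_apply_pos hU h00
  have star_c : star c = 1 - U 0 0 := by simp [c]
  let g (r : ℝ) : ℂ := c * (1 - (r : ℂ) • U).det / (1 - (r : ℂ) • W).det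
  have det_eq : (1 - U).det = (1 - U 0 0) * (1 - W).det :=
    det_one_sub_of_eq_oneBlock_sub_vecMulVec
      (c⁻¹ • (star ((1 - U).col 0) ᵥ* oneBlock W)) <| by
        rw [vecMulVec_smul, ← complexReflection_mul, hUW]
  have g_one : g 1 = Complex.normSq c := by
    simp only [g, Complex.ofReal_one, one_smul, det_eq, ← star_c, ← Complex.mul_conj,
      Complex.star_def]
    field_simp
  have g_one_pos : 0 < Complex.normSq c := Complex.normSq_pos.mpr (Complex.ne_zero_of_re_pos hc)
  have g_continuousAt : ContinuousAt g 1 :=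
    ContinuousAt.div (by fun_prop) (by fun_prop) (by simpa using hdet)
  have arg_g_tendsto :
      Tendsto (fun r => Complex.arg (g r)) (nhdsWithin 1 (Set.Iio 1)) (nhds 0) := by
    rw [← Complex.arg_ofReal_of_nonneg g_one_pos.le, ← g_one]
    refine ((Complex.continuousAt_arg ?_).comp g_continuousAt).mono_left nhdsWithin_le_nhds
    rw [g_one]
    exact Complex.ofReal_mem_slitPlane.mpr g_one_pos
  have phase_tendsto := ((tendsto_phase_smul hW).add arg_g_tendsto).sub_const (Complex.arg c)
  have arg_c : Complex.arg (1 - U 0 0) = - Complex.arg c := by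
    rw [← star_c, Complex.star_def, Complex.arg_conj, if_neg]
    exact fun h => (Complex.arg_eq_pi_iff.mp h).1.not_gt hc
  rw [arg_c, ← sub_eq_add_neg, ← add_zero (phase W)]
  refine tendsto_nhds_unique (tendsto_phase_smul hU) (phase_tendsto.congr' ?_)
  filter_upwards [Ioo_mem_nhdsLT zero_lt_one] with r hr
  have := phase_smul_complexReflection_mul_oneBlock hW hc (star_dotProduct_one_sub_col hU 0)
    (abs_lt.mpr ⟨by linarith [hr.1], hr.2⟩)
  rw [hUW] at this
  exact this.symm

end ReflectionDecomposition

section UnitaryMaps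

open Matrix

section Scalar

variable {n : Type*} [Fintype n] [DecidableEq n]

/-- The scalar matrix of a unit complex number, as a unitary matrix. -/
def scalarUnitary (z : Circle) : unitaryGroup n ℂ :=
  ⟨(z : ℂ) • 1, by
    rw [mem_unitaryGroup_iff, star_smul, star_one, smul_mul_smul_comm, mul_one, Complex.star_def,
      Complex.mul_conj, Circle.normSq_coe, Complex.ofReal_one, one_smul]⟩

theorem coe_scalarUnitary_mul (z : Circle) (U : unitaryGroup n ℂ) :
    ((scalarUnitary z * U : unitaryGroup n ℂ) : Matrix n n ℂ) = (z : ℂ) • (U : Matrix n n ℂ) := by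
  rw [Submonoid.coe_mul, scalarUnitary, smul_mul_assoc, one_mul]

end Scalar

/-- The inclusion `V ↦ 1 ⊕ V` of unitary groups. -/
def oneBlockHom (n : ℕ) : unitaryGroup (Fin n) ℂ →* unitaryGroup (Fin (n + 1)) ℂ where
  toFun V := ⟨oneBlock V, oneBlock_mem_unitaryGroup_iff.mpr V.2⟩
  map_one' := Subtype.ext oneBlock_one
  map_mul' V W := Subtype.ext (oneBlock_mul (V : Matrix (Fin n) (Fin n) ℂ) W)

theorem coe_oneBlockHom {n : ℕ} (V : unitaryGroup (Fin n) ℂ) :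
    (oneBlockHom n V : Matrix (Fin (n + 1)) (Fin (n + 1)) ℂ) = oneBlock V := rfl

theorem continuous_oneBlockHom (n : ℕ) : Continuous (oneBlockHom n) :=
  (continuous_oneBlock.comp continuous_subtype_val).subtype_mk _

theorem col_zero_mul_oneBlockHom {n : ℕ} (U : unitaryGroup (Fin (n + 1)) ℂ)
    (V : unitaryGroup (Fin n) ℂ) :
    (U * oneBlockHom n V).1.col 0 = U.1.col 0 := by
  ext i
  simp [coe_oneBlockHom, mul_apply, Fin.sum_univ_succ]

theorem exists_forall_phase_mul_oneBlockHom_eq {n : ℕ} (U : unitaryGroup (Fin (n + 1)) ℂ)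
    (hU : U.1 0 0 ≠ 1) :
    ∃ W : unitaryGroup (Fin n) ℂ, ∀ V : unitaryGroup (Fin n) ℂ, (1 - (W * V).1).det ≠ 0 →
      phase (U * oneBlockHom n V).1 = phase (W * V).1 + Complex.arg (1 - U.1 0 0) := by
  obtain ⟨A, hA, hA_col, hAU⟩ := exists_complexReflection_mul_eq U.2 hU
  obtain ⟨W, hW, rfl⟩ := exists_oneBlock_eq_of_col_zero hA hA_col
  refine ⟨⟨W, hW⟩, fun V hdet => ?_⟩
  have h_col := col_zero_mul_oneBlockHom U V
  have h00 : (U * oneBlockHom n V).1 0 0 = U.1 0 0 := congrFun h_col 0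
  have h_one_sub_col : (1 - (U * oneBlockHom n V).1).col 0 = (1 - U.1).col 0 :=
    congrArg (fun u => (1 : Matrix (Fin (n + 1)) (Fin (n + 1)) ℂ).col 0 - u) h_col
  rw [← h00] at hU ⊢
  refine phase_eq_phase_add_arg (mul_mem hW V.2) (U * oneBlockHom n V).2 hU hdet ?_
  rw [h_one_sub_col, h00, oneBlock_mul, ← mul_assoc, hAU, Submonoid.coe_mul, coe_oneBlockHom]

end UnitaryMaps

section NullSets

open Matrix

section CharpolyRoots

variable {K n : Type*} [Field K] [IsAlgClosed K] [Fintype n] [DecidableEq n] {A : Matrix n n K}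

theorem det_one_sub_smul_eq_zero_iff {c : K} :
    (1 - c • A).det = 0 ↔ ∃ z ∈ A.charpoly.roots, 1 - c * z = 0 := by
  rw [det_one_sub_eq_prod_roots_charpoly, roots_charpoly_smul, Multiset.map_map,
    Multiset.prod_eq_zero_iff, Multiset.mem_map]
  rfl

theorem card_le_of_forall_det_one_sub_smul_eq_zero {s : Finset K}
    (hs : ∀ c ∈ s, (1 - c • A).det = 0) : s.card ≤ Fintype.card n := by
  classical
  have inv_mem_roots : Set.MapsTo (·⁻¹) (s : Set K) A.charpoly.roots.toFinset := fun c hc => by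
    obtain ⟨z, hz, hcz⟩ := det_one_sub_smul_eq_zero_iff.mp (hs c hc)
    have : c⁻¹ ∈ A.charpoly.roots := by
      rwa [inv_eq_of_mul_eq_one_right (sub_eq_zero.mp hcz).symm]
    exact Multiset.mem_toFinset.mpr this
  calc s.card ≤ A.charpoly.roots.toFinset.card :=
        Finset.card_le_card_of_injOn _ inv_mem_roots inv_injective.injOn
    _ ≤ A.charpoly.roots.card := Multiset.toFinset_card_le _
    _ = Fintype.card n := card_roots_charpoly A

end CharpolyRoots

theorem infinite_circle : Infinite Circle :=
  have := (Set.Ioc_infinite (neg_lt_self pi_pos)).to_subtype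
  Circle.argEquiv.infinite_iff.mpr this

-- By Bergelson's lemma, a non-null set has infinitely many rotations of which any `n + 1` meet; a
-- matrix in all of them would have `n + 1` eigenvalues.
theorem ae_det_one_sub_ne_zero {n : ℕ} (μ : Measure (unitaryGroup (Fin n) ℂ)) [IsFiniteMeasure μ]
    [μ.IsMulLeftInvariant] : ∀ᵐ U ∂μ, (1 - U.1).det ≠ 0 := by
  let s (z : Circle) : Set (unitaryGroup (Fin n) ℂ) := {U | (1 - (z : ℂ) • U.1).det = 0}
  have s_closed (z : Circle) : IsClosed (s z) := isClosed_eq (by fun_prop) continuous_const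
  have measure_s (z : Circle) : μ (s z) = μ (s 1) := by
    rw [← measure_preimage_mul μ (scalarUnitary z) (s 1)]
    simp only [s, Set.preimage_ofPred_eq, coe_scalarUnitary_mul, Circle.coe_one, one_smul]
  by_contra h
  have h_ne : μ (s 1) ≠ 0 := fun h0 => h (by simpa [ae_iff, s] using h0)
  have := infinite_circle
  obtain ⟨t, ht_inf, ht⟩ := bergelson (fun z => (s_closed z).measurableSet) h_ne
    fun z => (measure_s z).ge
  obtain ⟨u, hut, hu_card⟩ := ht_inf.exists_subset_card_eq (n + 1)
  obtain ⟨U, hU⟩ := nonempty_of_measure_ne_zero (ht hut u.finite_toSet).ne'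
  let coe : Circle ↪ ℂ := ⟨(↑), Circle.coe_injective⟩
  have hU' : ∀ c ∈ u.map coe, (1 - c • U.1).det = 0 := fun c hc => by
    obtain ⟨z, hz, rfl⟩ := Finset.mem_map.mp hc
    exact Set.mem_iInter₂.mp hU z hz
  have := card_le_of_forall_det_one_sub_smul_eq_zero hU'
  rw [Finset.card_map, hu_card, Fintype.card_fin] at this
  omega

theorem det_one_sub_eq_zero_of_apply_eq_one {n : Type*} [Fintype n] [DecidableEq n]
    {U : Matrix n n ℂ} (hU : U ∈ unitaryGroup n ℂ) {i : n} (hi : U i i = 1) :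
    (1 - U).det = 0 := by
  have h := star_dotProduct_one_sub_col hU i
  open scoped ComplexOrder in
  rw [hi, star_one, sub_self, star_zero, add_zero, dotProduct_star_self_eq_zero] at h
  exact det_eq_zero_of_column_eq_zero i fun j => congrFun h j

theorem ae_apply_zero_zero_ne_one {n : ℕ} (μ : Measure (unitaryGroup (Fin (n + 1)) ℂ))
    [IsFiniteMeasure μ] [μ.IsMulLeftInvariant] : ∀ᵐ U ∂μ, U.1 0 0 ≠ 1 := by
  filter_upwards [ae_det_one_sub_ne_zero μ] with U hU h00
  exact hU (det_one_sub_eq_zero_of_apply_eq_one U.2 h00)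

end NullSets

section EntryMoments

open Matrix

section General

variable {n : Type*} [Fintype n] [DecidableEq n]

/-- The permutation matrix of `σ`, as a unitary matrix. -/
noncomputable def permUnitary (σ : Equiv.Perm n) : unitaryGroup n ℂ :=
  ⟨σ.permMatrix ℂ, by
    rw [mem_unitaryGroup_iff, star_eq_conjTranspose, conjTranspose_permMatrix, ← permMatrix_mul,
      inv_mul_cancel, permMatrix_one]⟩

theorem permUnitary_mul_apply (σ : Equiv.Perm n) (U : unitaryGroup n ℂ) (i j : n) :
    (permUnitary σ * U : unitaryGroup n ℂ).1 i j = U.1 (σ i) j := by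
  change (σ.permMatrix ℂ * U.1) i j = _
  rw [Equiv.Perm.permMatrix, PEquiv.toMatrix_toPEquiv_mul]
  rfl

theorem sum_norm_sq_apply {U : Matrix n n ℂ} (hU : U ∈ unitaryGroup n ℂ) (j : n) :
    ∑ i, ‖U i j‖ ^ 2 = 1 := by
  have h := congrFun₂ (mem_unitaryGroup_iff'.mp hU) j j
  simp only [mul_apply, star_apply, Complex.star_def, Complex.conj_mul', one_apply_eq] at h
  exact_mod_cast h

@[fun_prop]
theorem continuous_coe_apply (i j : n) : Continuous fun U : unitaryGroup n ℂ => U.1 i j :=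
  continuous_subtype_val.matrix_elem i j

end General

variable {n : ℕ} (μ : Measure (unitaryGroup (Fin n) ℂ))

theorem integrable_of_continuous [IsFiniteMeasure μ] {f : unitaryGroup (Fin n) ℂ → ℝ}
    (hf : Continuous f) : Integrable f μ :=
  hf.integrable_of_hasCompactSupport (HasCompactSupport.of_compactSpace f)

variable [μ.IsMulLeftInvariant] (i j : Fin n)

theorem integral_im_apply : ∫ U, (U.1 i j).im ∂μ = 0 := by
  have h := integral_mul_left_eq_self (μ := μ) (fun U => (U.1 i j).im)
    (scalarUnitary (Circle.exp π))
  simp only [coe_scalarUnitary_mul, Circle.coe_exp, Complex.exp_pi_mul_I, neg_smul, one_smul,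
    Matrix.neg_apply, Complex.neg_im, integral_neg] at h
  linarith

theorem integral_norm_sq_apply [IsProbabilityMeasure μ] :
    ∫ U, ‖U.1 i j‖ ^ 2 ∂μ = (n : ℝ)⁻¹ := by
  have row_exchange (k : Fin n) : ∫ U, ‖U.1 k j‖ ^ 2 ∂μ = ∫ U, ‖U.1 i j‖ ^ 2 ∂μ := by
    have h := integral_mul_left_eq_self (μ := μ) (fun U => ‖U.1 i j‖ ^ 2)
      (permUnitary (Equiv.swap i k))
    simpa only [permUnitary_mul_apply, Equiv.swap_apply_left] using h
  have sum_eq_one : ∑ k, ∫ U, ‖U.1 k j‖ ^ 2 ∂μ = 1 := by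
    rw [← integral_finsetSum _ fun k _ => integrable_of_continuous μ (by fun_prop)]
    simp only [sum_norm_sq_apply (Subtype.prop _), integral_const, probReal_univ, smul_eq_mul,
      mul_one]
  simp only [row_exchange, Finset.sum_const, Finset.card_univ, Fintype.card_fin, nsmul_eq_mul]
    at sum_eq_one
  exact eq_inv_of_mul_eq_one_right sum_eq_one

end EntryMoments

section EntryArg

open Matrix

theorem abs_arg_one_sub_add_im_le {a : ℂ} (ha : ‖a‖ ≤ 1 / 2) :
    |Complex.arg (1 - a) + a.im| ≤ ‖a‖ ^ 2 := by
  have log_bound : ‖Complex.log (1 - a) + a‖ ≤ ‖a‖ ^ 2 * (1 - ‖a‖)⁻¹ / 2 := by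
    simpa [sub_eq_add_neg] using
      Complex.norm_log_one_add_sub_self_le (z := -a) (by rw [norm_neg]; linarith)
  have inv_le : (1 - ‖a‖)⁻¹ ≤ 2 := inv_le_of_inv_le₀ two_pos (by linarith)
  calc |Complex.arg (1 - a) + a.im| ≤ ‖Complex.log (1 - a) + a‖ := by
        simpa [Complex.log_im] using Complex.abs_im_le_norm (Complex.log (1 - a) + a)
    _ ≤ ‖a‖ ^ 2 := by nlinarith [sq_nonneg ‖a‖]

theorem exp_mul_arg_one_sub_le {a : ℂ} (ha : ‖a‖ ≤ 1) {t : ℝ} (ht : |t| ≤ 1) :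
    exp (t * Complex.arg (1 - a)) ≤ 1 - t * a.im + 30 * ‖a‖ ^ 2 := by
  have abs_im : |t * a.im| ≤ ‖a‖ := by
    rw [abs_mul]
    exact (mul_le_of_le_one_left (abs_nonneg _) ht).trans (Complex.abs_im_le_norm a)
  rcases le_total ‖a‖ (1 / 2) with h | h
  · have linear_approx : |t * Complex.arg (1 - a) + t * a.im| ≤ ‖a‖ ^ 2 := by
      rw [← mul_add, abs_mul]
      exact (mul_le_of_le_one_left (abs_nonneg _) ht).trans (abs_arg_one_sub_add_im_le h)
    rw [abs_le] at abs_im linear_approx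
    have abs_exponent : |t * Complex.arg (1 - a)| ≤ 2 * ‖a‖ := by
      rw [abs_le]
      constructor <;> nlinarith
    have sq_exponent : (t * Complex.arg (1 - a)) ^ 2 ≤ (2 * ‖a‖) ^ 2 :=
      sq_le_sq' (abs_le.mp abs_exponent).1 (abs_le.mp abs_exponent).2
    have := (abs_le.mp (abs_exp_sub_one_sub_id_le (abs_exponent.trans (by linarith)))).2
    nlinarith
  · have exponent_le : t * Complex.arg (1 - a) ≤ 2 := by
      have abs_arg : |Complex.arg (1 - a)| ≤ π / 2 := Complex.abs_arg_le_pi_div_two_iff.mpr <| by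
        simpa using (Complex.re_le_norm a).trans ha
      calc t * Complex.arg (1 - a) ≤ |t| * |Complex.arg (1 - a)| := by
            rw [← abs_mul]; exact le_abs_self _
        _ ≤ π / 2 := (mul_le_of_le_one_left (abs_nonneg _) ht).trans abs_arg
        _ ≤ 2 := by linarith [pi_le_four]
    have exp_two_le : exp 2 ≤ 7.5 := by
      rw [← one_add_one_eq_two, exp_add]
      nlinarith [exp_one_lt_d9, exp_one_gt_d9]
    have := exp_le_exp.mpr exponent_le
    have := (abs_le.mp abs_im).2
    nlinarith

theorem lintegral_exp_mul_arg_one_sub_apply_le {n : ℕ} (μ : Measure (unitaryGroup (Fin n) ℂ))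
    [IsProbabilityMeasure μ] [μ.IsMulLeftInvariant] (i j : Fin n) {t : ℝ} (ht : |t| ≤ 1) :
    ∫⁻ U, ENNReal.ofReal (exp (t * Complex.arg (1 - U.1 i j))) ∂μ ≤
      ENNReal.ofReal (1 + 30 * (n : ℝ)⁻¹) := by
  let f (U : unitaryGroup (Fin n) ℂ) : ℝ := 1 - t * (U.1 i j).im + 30 * ‖U.1 i j‖ ^ 2
  have exp_le_f (U : unitaryGroup (Fin n) ℂ) : exp (t * Complex.arg (1 - U.1 i j)) ≤ f U :=
    exp_mul_arg_one_sub_le (entry_norm_bound_of_unitary U.2 i j) ht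
  have integrable_im : Integrable (fun U : unitaryGroup (Fin n) ℂ => t * (U.1 i j).im) μ :=
    integrable_of_continuous μ (by fun_prop)
  have integrable_norm_sq :
      Integrable (fun U : unitaryGroup (Fin n) ℂ => 30 * ‖U.1 i j‖ ^ 2) μ :=
    integrable_of_continuous μ (by fun_prop)
  have integrable_linear :
      Integrable (fun U : unitaryGroup (Fin n) ℂ => 1 - t * (U.1 i j).im) μ :=
    integrable_of_continuous μ (by fun_prop)
  have integrable_f : Integrable f μ := integrable_linear.add integrable_norm_sq
  have integral_f : ∫ U, f U ∂μ = 1 + 30 * (n : ℝ)⁻¹ := by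
    simp only [f]
    rw [integral_add integrable_linear integrable_norm_sq,
      integral_sub (integrable_const _) integrable_im, integral_const_mul, integral_const_mul,
      integral_im_apply, integral_norm_sq_apply, integral_const, probReal_univ]
    simp
  calc ∫⁻ U, ENNReal.ofReal (exp (t * Complex.arg (1 - U.1 i j))) ∂μ
      ≤ ∫⁻ U, ENNReal.ofReal (f U) ∂μ :=
        lintegral_mono fun U => ENNReal.ofReal_le_ofReal (exp_le_f U)
    _ = ENNReal.ofReal (1 + 30 * (n : ℝ)⁻¹) := by
        rw [← integral_f, ofReal_integral_eq_lintegral_ofReal integrable_f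
          (Eventually.of_forall fun U => (exp_pos _).le.trans (exp_le_f U))]

end EntryArg

section PhaseMoments

open Matrix

theorem measurable_ofReal_exp_mul_phase {n : ℕ} (t : ℝ) :
    Measurable fun U : unitaryGroup (Fin n) ℂ => ENNReal.ofReal (exp (t * phase U.1)) :=
  (measurable_phase.const_mul t).exp.ennreal_ofReal

theorem lintegral_exp_mul_phase_mul_oneBlockHom {n : ℕ} (ν : Measure (unitaryGroup (Fin n) ℂ))
    [IsFiniteMeasure ν] [ν.IsMulLeftInvariant] (t : ℝ) {U : unitaryGroup (Fin (n + 1)) ℂ}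
    (hU : U.1 0 0 ≠ 1) :
    ∫⁻ V, ENNReal.ofReal (exp (t * phase (U * oneBlockHom n V).1)) ∂ν =
      ENNReal.ofReal (exp (t * Complex.arg (1 - U.1 0 0))) *
        ∫⁻ V, ENNReal.ofReal (exp (t * phase V.1)) ∂ν := by
  obtain ⟨W, hW⟩ := exists_forall_phase_mul_oneBlockHom_eq U hU
  have det_ne_zero : ∀ᵐ V ∂ν, (1 - (W * V).1).det ≠ 0 :=
    (measurePreserving_mul_left ν W).quasiMeasurePreserving.ae (ae_det_one_sub_ne_zero ν)
  calc ∫⁻ V, ENNReal.ofReal (exp (t * phase (U * oneBlockHom n V).1)) ∂ν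
      = ∫⁻ V, ENNReal.ofReal (exp (t * Complex.arg (1 - U.1 0 0))) *
          ENNReal.ofReal (exp (t * phase (W * V).1)) ∂ν := by
        refine lintegral_congr_ae ?_
        filter_upwards [det_ne_zero] with V hV
        rw [hW V hV, ← ENNReal.ofReal_mul (exp_pos _).le, ← exp_add, mul_add, add_comm]
    _ = ENNReal.ofReal (exp (t * Complex.arg (1 - U.1 0 0))) *
          ∫⁻ V, ENNReal.ofReal (exp (t * phase (W * V).1)) ∂ν :=
        lintegral_const_mul' _ _ ENNReal.ofReal_ne_top
    _ = _ := by
        rw [lintegral_mul_left_eq_self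
          (fun V : unitaryGroup (Fin n) ℂ => ENNReal.ofReal (exp (t * phase V.1))) W]

theorem lintegral_exp_mul_phase_succ {n : ℕ} (μ : Measure (unitaryGroup (Fin (n + 1)) ℂ))
    [IsProbabilityMeasure μ] [μ.IsHaarMeasure] (ν : Measure (unitaryGroup (Fin n) ℂ))
    [IsProbabilityMeasure ν] [ν.IsMulLeftInvariant] (t : ℝ) :
    ∫⁻ U, ENNReal.ofReal (exp (t * phase U.1)) ∂μ =
      (∫⁻ U, ENNReal.ofReal (exp (t * Complex.arg (1 - U.1 0 0))) ∂μ) *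
        ∫⁻ V, ENNReal.ofReal (exp (t * phase V.1)) ∂ν := by
  have := isMulRightInvariant_of_compactSpace μ
  let f (U : unitaryGroup (Fin (n + 1)) ℂ) := ENNReal.ofReal (exp (t * phase U.1))
  have measurable_f : Measurable f := measurable_ofReal_exp_mul_phase t
  have continuous_mul_oneBlockHom : Continuous fun q : unitaryGroup (Fin n) ℂ ×
      unitaryGroup (Fin (n + 1)) ℂ => q.2 * oneBlockHom n q.1 :=
    continuous_snd.mul ((continuous_oneBlockHom n).comp continuous_fst)
  calc ∫⁻ U, f U ∂μ = ∫⁻ _ : unitaryGroup (Fin n) ℂ, ∫⁻ U, f U ∂μ ∂ν := by simp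
    _ = ∫⁻ V, ∫⁻ U, f (U * oneBlockHom n V) ∂μ ∂ν := by
        simp only [lintegral_mul_right_eq_self]
    _ = ∫⁻ U, ∫⁻ V, f (U * oneBlockHom n V) ∂ν ∂μ :=
        lintegral_lintegral_swap
          (measurable_f.comp continuous_mul_oneBlockHom.measurable).aemeasurable
    _ = ∫⁻ U, ENNReal.ofReal (exp (t * Complex.arg (1 - U.1 0 0))) *
          ∫⁻ V, ENNReal.ofReal (exp (t * phase V.1)) ∂ν ∂μ := by
        refine lintegral_congr_ae ?_
        filter_upwards [ae_apply_zero_zero_ne_one μ] with U hU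
        exact lintegral_exp_mul_phase_mul_oneBlockHom ν t hU
    _ = _ := by
        refine lintegral_mul_const _ ?_
        have measurable_entry := (continuous_coe_apply (n := Fin (n + 1)) 0 0).measurable
        exact ((Complex.measurable_arg.comp (measurable_entry.const_sub 1)).const_mul t).exp
          |>.ennreal_ofReal

theorem phase_of_isEmpty {n : Type*} [Fintype n] [DecidableEq n] [IsEmpty n] (A : Matrix n n ℂ) :
    phase A = 0 := by
  simp [phase_eq_sum_arg]

theorem lintegral_exp_mul_phase_le_exp_harmonic {n : ℕ} (μ : Measure (unitaryGroup (Fin n) ℂ))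
    [IsProbabilityMeasure μ] [μ.IsHaarMeasure] {t : ℝ} (ht : |t| ≤ 1) :
    ∫⁻ U, ENNReal.ofReal (exp (t * phase U.1)) ∂μ ≤
      ENNReal.ofReal (exp (30 * (harmonic n : ℝ))) := by
  induction n with
  | zero => simp [phase_of_isEmpty]
  | succ n ih =>
    obtain ⟨ν, _, _⟩ := exists_isHaarMeasure_isProbabilityMeasure (G := unitaryGroup (Fin n) ℂ)
    rw [lintegral_exp_mul_phase_succ μ ν t]
    refine (mul_le_mul' (lintegral_exp_mul_arg_one_sub_apply_le μ 0 0 ht) (ih ν)).trans ?_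
    rw [← ENNReal.ofReal_mul (by positivity)]
    refine ENNReal.ofReal_le_ofReal ?_
    rw [harmonic_succ, Rat.cast_add, mul_add, exp_add, mul_comm]
    gcongr
    have := add_one_le_exp (30 * ((n + 1 : ℕ) : ℝ)⁻¹)
    push_cast at this ⊢
    linarith

theorem lintegral_exp_abs_phase_le {n : ℕ} (μ : Measure (unitaryGroup (Fin n) ℂ))
    [IsProbabilityMeasure μ] [μ.IsHaarMeasure] :
    ∫⁻ U, ENNReal.ofReal (exp |phase U.1|) ∂μ ≤
      ENNReal.ofReal (2 * exp (30 * (1 + log n))) := by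
  have moment_le {t : ℝ} (ht : |t| ≤ 1) : ∫⁻ U, ENNReal.ofReal (exp (t * phase U.1)) ∂μ ≤
      ENNReal.ofReal (exp (30 * (1 + log n))) :=
    (lintegral_exp_mul_phase_le_exp_harmonic μ ht).trans <| by
      gcongr
      exact harmonic_le_one_add_log n
  calc ∫⁻ U, ENNReal.ofReal (exp |phase U.1|) ∂μ
      ≤ ∫⁻ U, (ENNReal.ofReal (exp (1 * phase U.1)) + ENNReal.ofReal (exp (-1 * phase U.1))) ∂μ :=
        lintegral_mono fun U => by
          rw [← ENNReal.ofReal_add (exp_pos _).le (exp_pos _).le, one_mul, neg_one_mul]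
          exact ENNReal.ofReal_le_ofReal (exp_abs_le _)
    _ ≤ ENNReal.ofReal (exp (30 * (1 + log n))) + ENNReal.ofReal (exp (30 * (1 + log n))) := by
        rw [lintegral_add_left (measurable_ofReal_exp_mul_phase 1)]
        exact add_le_add (moment_le (by simp)) (moment_le (by simp))
    _ = ENNReal.ofReal (2 * exp (30 * (1 + log n))) := by
        rw [← ENNReal.ofReal_add (exp_pos _).le (exp_pos _).le, two_mul]

end PhaseMoments

section EigenAngles

open Matrix

variable {n : ℕ} (U : unitaryGroup (Fin n) ℂ)

theorem card_eigenAngles : (eigenAngles n U).card = n := by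
  rw [eigenAngles, Multiset.card_map, card_roots_charpoly, Fintype.card_fin]

variable {U}

theorem mem_Ico_of_mem_eigenAngles {ψ : ℝ} (hψ : ψ ∈ eigenAngles n U) :
    ψ ∈ Set.Ico 0 (2 * π) := by
  obtain ⟨z, -, rfl⟩ := Multiset.mem_map.mp hψ
  have := Complex.arg_le_pi z
  have := Complex.neg_pi_lt_arg z
  split_ifs <;> constructor <;> linarith [pi_pos]

theorem map_cexp_eigenAngles :
    (eigenAngles n U).map (fun ψ : ℝ => Complex.exp (ψ * Complex.I)) = U.1.charpoly.roots := by
  rw [eigenAngles, Multiset.map_map]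
  refine (Multiset.map_congr rfl fun z hz => ?_).trans (Multiset.map_id' _)
  have cexp_arg : Complex.exp (Complex.arg z * Complex.I) = z := by
    simpa [norm_eq_one_of_mem_roots_charpoly U.2 hz] using Complex.norm_mul_exp_arg_mul_I z
  dsimp only [Function.comp_apply]
  split_ifs
  · exact cexp_arg
  · simp [add_mul, Complex.exp_add, cexp_arg]

theorem phase_cexp_smul (θ : ℝ) :
    phase (Complex.exp (-θ * Complex.I) • U.1) =
      ((eigenAngles n U).map fun ψ : ℝ =>
        Complex.arg (1 - Complex.exp (((ψ - θ : ℝ) : ℂ) * Complex.I))).sum := by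
  rw [phase_smul, ← map_cexp_eigenAngles, Multiset.map_map]
  refine congrArg _ (Multiset.map_congr rfl fun ψ _ => ?_)
  rw [Function.comp_apply, ← Complex.exp_add, ← add_mul, neg_add_eq_sub, Complex.ofReal_sub]

theorem phase_eq_sum_eigenAngles :
    phase U.1 = ((eigenAngles n U).map fun ψ : ℝ =>
      Complex.arg (1 - Complex.exp ((ψ : ℂ) * Complex.I))).sum := by
  simpa using phase_cexp_smul (U := U) 0

theorem ne_of_mem_eigenAngles {θ ψ : ℝ}
    (hdet : (1 - Complex.exp (-θ * Complex.I) • U.1).det ≠ 0) (hψ : ψ ∈ eigenAngles n U) :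
    ψ ≠ θ := by
  rintro rfl
  refine hdet (det_one_sub_smul_eq_zero_iff.mpr ⟨Complex.exp (ψ * Complex.I), ?_, ?_⟩)
  · rw [← map_cexp_eigenAngles]
    exact Multiset.mem_map_of_mem _ hψ
  · rw [← Complex.exp_add, neg_mul, neg_add_cancel, Complex.exp_zero, sub_self]

end EigenAngles

section CountFun

open Matrix

theorem arg_one_sub_cexp_mul_I {ψ : ℝ} (hψ : ψ ∈ Set.Ioo 0 (2 * π)) :
    Complex.arg (1 - Complex.exp (ψ * Complex.I)) = (ψ - π) / 2 := by
  have sin_pos : 0 < 2 * sin (ψ / 2) :=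
    mul_pos two_pos (sin_pos_of_pos_of_lt_pi (by linarith [hψ.1]) (by linarith [hψ.2]))
  have cos_eq : cos ((ψ - π) / 2) = sin (ψ / 2) := by rw [sub_div, cos_sub_pi_div_two]
  have sin_eq : sin ((ψ - π) / 2) = -cos (ψ / 2) := by rw [sub_div, sin_sub_pi_div_two]
  have polar_form : 1 - Complex.exp (ψ * Complex.I) = ((2 * sin (ψ / 2) : ℝ) : ℂ) *
      (Complex.cos ((ψ - π) / 2 : ℝ) + Complex.sin ((ψ - π) / 2 : ℝ) * Complex.I) := by
    rw [← Complex.ofReal_cos, ← Complex.ofReal_sin, cos_eq, sin_eq]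
    have cos_double : cos ψ = 1 - 2 * sin (ψ / 2) ^ 2 := by
      rw [← mul_div_cancel₀ ψ two_ne_zero, cos_two_mul, cos_sq']
      ring_nf
    have sin_double : sin ψ = 2 * sin (ψ / 2) * cos (ψ / 2) := by
      rw [← sin_two_mul, mul_div_cancel₀ ψ two_ne_zero]
    apply Complex.ext
    · simp [Complex.exp_ofReal_mul_I_re, cos_double, -Complex.ofReal_sin, -Complex.ofReal_cos]
      ring
    · simp [Complex.exp_ofReal_mul_I_im, sin_double, -Complex.ofReal_sin, -Complex.ofReal_cos]
  rw [polar_form]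
  exact Complex.arg_mul_cos_add_sin_mul_I sin_pos
    ⟨by linarith [hψ.1, pi_pos], by linarith [hψ.2, pi_pos]⟩

theorem arg_one_sub_cexp_sub_arg_one_sub_cexp {ψ θ : ℝ} (hψ : ψ ∈ Set.Ioo 0 (2 * π))
    (hθ : θ ∈ Set.Icc 0 (2 * π)) (hne : ψ ≠ θ) :
    Complex.arg (1 - Complex.exp (((ψ - θ : ℝ) : ℂ) * Complex.I)) -
        Complex.arg (1 - Complex.exp (ψ * Complex.I)) =
      (if ψ ≤ θ then π else 0) - θ / 2 := by
  obtain ⟨hψ0, hψ1⟩ := hψ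
  obtain ⟨hθ0, hθ1⟩ := hθ
  rw [arg_one_sub_cexp_mul_I ⟨hψ0, hψ1⟩]
  rcases hne.lt_or_gt with hlt | hgt
  · have periodic : Complex.exp (((ψ - θ : ℝ) : ℂ) * Complex.I) =
        Complex.exp (((ψ - θ + 2 * π : ℝ) : ℂ) * Complex.I) := by
      simp [add_mul, Complex.exp_add]
    rw [if_pos hlt.le, periodic, arg_one_sub_cexp_mul_I ⟨by linarith, by linarith⟩]
    ring
  · rw [if_neg hgt.not_ge, arg_one_sub_cexp_mul_I ⟨by linarith, by linarith⟩]
    ring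

theorem sum_map_ite_const_zero {α R : Type*} [NonAssocSemiring R] (s : Multiset α) (p : α → Prop)
    [DecidablePred p] (c : R) :
    (s.map fun a => if p a then c else 0).sum = (s.filter p).card * c := by
  induction s using Multiset.induction_on with
  | empty => simp
  | cons a s ih => by_cases h : p a <;> simp [h, ih, add_mul, add_comm]

variable {n : ℕ} {U : unitaryGroup (Fin n) ℂ}

theorem countFun_eq_card_filter (θ : ℝ) :
    countFun n U θ = ((eigenAngles n U).filter (· ≤ θ)).card := by
  classical
  rw [countFun, countAngles]
  congr 1
  convert Multiset.filter_congr fun ψ hψ => ?_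
  exact ⟨And.right, And.intro (mem_Ico_of_mem_eigenAngles hψ).1⟩

theorem phase_cexp_smul_sub_phase {θ : ℝ} (hθ : θ ∈ Set.Icc 0 (2 * π))
    (hdet : (1 - U.1).det ≠ 0) (hdetθ : (1 - Complex.exp (-θ * Complex.I) • U.1).det ≠ 0) :
    phase (Complex.exp (-θ * Complex.I) • U.1) - phase U.1 =
      π * countFun n U θ - n * (θ / 2) := by
  have jump {ψ : ℝ} (hψ : ψ ∈ eigenAngles n U) :
      Complex.arg (1 - Complex.exp (((ψ - θ : ℝ) : ℂ) * Complex.I)) -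
        Complex.arg (1 - Complex.exp (ψ * Complex.I)) = (if ψ ≤ θ then π else 0) - θ / 2 := by
    obtain ⟨hψ0, hψ1⟩ := mem_Ico_of_mem_eigenAngles hψ
    have ψ_ne_zero : ψ ≠ 0 := ne_of_mem_eigenAngles (by simpa using hdet) hψ
    exact arg_one_sub_cexp_sub_arg_one_sub_cexp ⟨hψ0.lt_of_ne' ψ_ne_zero, hψ1⟩ hθ
      (ne_of_mem_eigenAngles hdetθ hψ)
  rw [phase_cexp_smul, phase_eq_sum_eigenAngles, ← Multiset.sum_map_sub,
    Multiset.map_congr rfl fun _ => jump, Multiset.sum_map_sub, sum_map_ite_const_zero,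
    Multiset.map_const', Multiset.sum_replicate, card_eigenAngles, nsmul_eq_mul,
    countFun_eq_card_filter, mul_comm]

theorem abs_countFun_sub_le_max_abs_phase {k : ℕ} (hk : k ∈ Finset.Icc 1 n)
    (hdet : (1 - U.1).det ≠ 0)
    (hdetk : (1 - Complex.exp (-(2 * π * k / n : ℝ) * Complex.I) • U.1).det ≠ 0) :
    |(countFun n U (2 * π * k / n) : ℝ) - k| ≤
      max |phase U.1| |phase (Complex.exp (-(2 * π * k / n : ℝ) * Complex.I) • U.1)| := by
  obtain ⟨hk1, hkn⟩ := Finset.mem_Icc.mp hk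
  have n_pos : (0 : ℝ) < n := by exact_mod_cast hk1.trans hkn
  have angle_mem : 2 * π * k / n ∈ Set.Icc 0 (2 * π) := by
    refine ⟨by positivity, div_le_of_le_mul₀ n_pos.le two_pi_pos.le ?_⟩
    gcongr
  have phase_sub := phase_cexp_smul_sub_phase angle_mem hdet hdetk
  rw [show (n : ℝ) * (2 * π * k / n / 2) = π * k by field_simp, ← mul_sub] at phase_sub
  set a := phase U.1
  set b := phase (Complex.exp (-(2 * π * k / n : ℝ) * Complex.I) • U.1)
  refine le_of_mul_le_mul_left ?_ (two_pos (α := ℝ))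
  calc 2 * |(countFun n U (2 * π * k / n) : ℝ) - k|
      ≤ π * |(countFun n U (2 * π * k / n) : ℝ) - k| := by gcongr; exact two_le_pi
    _ = |b - a| := by rw [phase_sub, abs_mul, abs_of_pos pi_pos]
    _ ≤ |b| + |a| := abs_sub b a
    _ ≤ 2 * max |a| |b| := by
      rw [two_mul]
      exact add_le_add (le_max_right _ _) (le_max_left _ _)

end CountFun

section MaxDev

open Matrix

variable {n : ℕ}

theorem maxDev_nonneg (U : unitaryGroup (Fin n) ℂ) : 0 ≤ maxDev n U :=
  iSup_nonneg fun _ => abs_nonneg _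

theorem ofReal_exp_maxDev_le (hn : n ≠ 0) {U : unitaryGroup (Fin n) ℂ}
    (hdet : (1 - U.1).det ≠ 0)
    (hdetk : ∀ k : ℕ, (1 - Complex.exp (-(2 * π * k / n : ℝ) * Complex.I) • U.1).det ≠ 0) :
    ENNReal.ofReal (exp (maxDev n U)) ≤ ENNReal.ofReal (exp |phase U.1|) +
      ∑ k ∈ Finset.Icc 1 n, ENNReal.ofReal
        (exp |phase (Complex.exp (-(2 * π * k / n : ℝ) * Complex.I) • U.1)|) := by
  have : Nonempty (Finset.Icc 1 n : Finset ℕ) :=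
    ⟨1, Finset.mem_Icc.mpr ⟨le_rfl, Nat.one_le_iff_ne_zero.mpr hn⟩⟩
  obtain ⟨⟨k, hk⟩, maxDev_eq⟩ := exists_eq_ciSup_of_finite
    (f := fun k : (Finset.Icc 1 n : Finset ℕ) =>
      |(countFun n U (2 * π * (k : ℕ) / n) : ℝ) - ((k : ℕ) : ℝ)|)
  have maxDev_le := abs_countFun_sub_le_max_abs_phase hk hdet (hdetk k)
  rw [maxDev, ← maxDev_eq]
  rcases le_max_iff.mp maxDev_le with h | h
  · exact (ENNReal.ofReal_le_ofReal (exp_le_exp.mpr h)).trans le_self_add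
  · refine (ENNReal.ofReal_le_ofReal (exp_le_exp.mpr h)).trans (le_add_of_nonneg_of_le zero_le ?_)
    exact Finset.single_le_sum (f := fun k : ℕ => ENNReal.ofReal
      (exp |phase (Complex.exp (-(2 * π * k / n : ℝ) * Complex.I) • U.1)|))
      (fun _ _ => zero_le) hk

theorem lintegral_exp_maxDev_le (hn : n ≠ 0) (μ : Measure (unitaryGroup (Fin n) ℂ))
    [IsProbabilityMeasure μ] [μ.IsHaarMeasure] :
    ∫⁻ U, ENNReal.ofReal (exp (maxDev n U)) ∂μ ≤
      ENNReal.ofReal ((n + 1) * (2 * exp (30 * (1 + log n)))) := by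
  let f (U : unitaryGroup (Fin n) ℂ) := ENNReal.ofReal (exp |phase U.1|)
  let rotation (k : ℕ) : unitaryGroup (Fin n) ℂ :=
    scalarUnitary (Circle.exp (-(2 * π * k / n)))
  have coe_rotation_mul (k : ℕ) (U : unitaryGroup (Fin n) ℂ) : (rotation k * U).1 =
      Complex.exp (-(2 * π * k / n : ℝ) * Complex.I) • U.1 := by
    rw [coe_scalarUnitary_mul, Circle.coe_exp, Complex.ofReal_neg]
  have measurable_f : Measurable f := (measurable_norm.comp measurable_phase).exp.ennreal_ofReal
  have measurable_f_rotation (k : ℕ) (_ : k ∈ Finset.Icc 1 n) :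
      Measurable fun U => f (rotation k * U) :=
    measurable_f.comp (measurable_const_mul (rotation k))
  have det_ne_zero : ∀ᵐ U ∂μ, ∀ k, (1 - (rotation k * U).1).det ≠ 0 := ae_all_iff.mpr fun k =>
    (measurePreserving_mul_left μ (rotation k)).quasiMeasurePreserving.ae
      (ae_det_one_sub_ne_zero μ)
  calc ∫⁻ U, ENNReal.ofReal (exp (maxDev n U)) ∂μ
      ≤ ∫⁻ U, (f U + ∑ k ∈ Finset.Icc 1 n, f (rotation k * U)) ∂μ := by
        refine lintegral_mono_ae ?_
        filter_upwards [ae_det_one_sub_ne_zero μ, det_ne_zero] with U hdet hdetk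
        simp only [f, coe_rotation_mul] at hdetk ⊢
        exact ofReal_exp_maxDev_le hn hdet hdetk
    _ = (n + 1) * ∫⁻ U, f U ∂μ := by
        rw [lintegral_add_left measurable_f, lintegral_finsetSum _ (measurable_f_rotation · ·)]
        simp only [lintegral_mul_left_eq_self, Finset.sum_const, Nat.card_Icc,
          add_tsub_cancel_right, nsmul_eq_mul]
        ring
    _ ≤ (n + 1) * ENNReal.ofReal (2 * exp (30 * (1 + log n))) := by
        gcongr
        exact lintegral_exp_abs_phase_le μ
    _ = ENNReal.ofReal ((n + 1) * (2 * exp (30 * (1 + log n)))) := by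
        rw [ENNReal.ofReal_mul (p := (n : ℝ) + 1) (by positivity),
          ENNReal.ofReal_add n.cast_nonneg zero_le_one, ENNReal.ofReal_natCast, ENNReal.ofReal_one]

theorem lintegral_exp_maxDev_le_exp_log (hn : 2 ≤ n) (μ : Measure (unitaryGroup (Fin n) ℂ))
    [IsProbabilityMeasure μ] [μ.IsHaarMeasure] :
    ∫⁻ U, ENNReal.ofReal (exp (maxDev n U)) ∂μ ≤ ENNReal.ofReal (exp (93 * log n)) := by
  refine (lintegral_exp_maxDev_le (by lia) μ).trans (ENNReal.ofReal_le_ofReal ?_)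
  have two_le : (2 : ℝ) ≤ n := by exact_mod_cast hn
  have half_le_log : 1 / 2 ≤ log n := by
    have := log_le_log two_pos two_le
    linarith [log_two_gt_d9]
  calc (n + 1) * (2 * exp (30 * (1 + log n))) = 2 * (n + 1) * exp (30 * (1 + log n)) := by ring
    _ ≤ n ^ 3 * exp (90 * log n) := by
        refine mul_le_mul ?_ (exp_le_exp.mpr (by linarith)) (exp_pos _).le (by positivity)
        nlinarith [sq_nonneg ((n : ℝ) - 2)]
    _ = exp (93 * log n) := by
        rw [← exp_log (show (0 : ℝ) < n by linarith), ← exp_nat_mul, ← exp_add, log_exp]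
        ring_nf

end MaxDev

section MomentsOfExponentialMoment

theorem rpow_le_mul_one_add_exp_sub {q x K : ℝ} (hq : 0 < q) (hx : 0 ≤ x) (hK : 1 ≤ K) :
    x ^ q ≤ (q * K) ^ q * exp 1 * (1 + exp (x - K)) := by
  have K_pos : 0 < K := one_pos.trans_le hK
  have rpow_le : (x / (q * K)) ^ q ≤ exp (x / K) := by
    calc (x / (q * K)) ^ q ≤ exp (x / (q * K)) ^ q := by
          gcongr
          linarith [add_one_le_exp (x / (q * K))]
      _ = exp (x / K) := by
          rw [← exp_mul]
          congr 1
          field_simp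
  have exp_le : exp (x / K) ≤ exp 1 * (1 + exp (x - K)) := by
    rcases le_total x K with h | h
    · calc exp (x / K) ≤ exp 1 := exp_le_exp.mpr ((div_le_one K_pos).mpr h)
        _ ≤ exp 1 * (1 + exp (x - K)) :=
          le_mul_of_one_le_right (exp_pos 1).le (by linarith [exp_pos (x - K)])
    · have div_le : x / K ≤ 1 + (x - K) := by
        rw [div_le_iff₀ K_pos]
        nlinarith
      calc exp (x / K) ≤ exp 1 * exp (x - K) := by
            rw [← exp_add]
            exact exp_le_exp.mpr div_le
        _ ≤ exp 1 * (1 + exp (x - K)) := by gcongr; linarith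
  calc x ^ q = (q * K) ^ q * (x / (q * K)) ^ q := by
        rw [← mul_rpow (by positivity) (by positivity), mul_div_cancel₀ _ (by positivity)]
    _ ≤ (q * K) ^ q * (exp 1 * (1 + exp (x - K))) := by
        gcongr
        exact rpow_le.trans exp_le
    _ = _ := (mul_assoc _ _ _).symm

theorem integral_rpow_le_of_lintegral_exp_le {Ω : Type*} [MeasurableSpace Ω] {μ : Measure Ω}
    [IsProbabilityMeasure μ] {X : Ω → ℝ} (hX : ∀ ω, 0 ≤ X ω) {q K : ℝ} (hq : 0 < q) (hK : 1 ≤ K)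
    (hexp : ∫⁻ ω, ENNReal.ofReal (exp (X ω)) ∂μ ≤ ENNReal.ofReal (exp K)) :
    ∫ ω, X ω ^ q ∂μ ≤ 2 * exp 1 * (q * K) ^ q := by
  have tail : ∫⁻ ω, ENNReal.ofReal (exp (X ω - K)) ∂μ ≤ 1 := by
    calc ∫⁻ ω, ENNReal.ofReal (exp (X ω - K)) ∂μ
        = ENNReal.ofReal (exp (-K)) * ∫⁻ ω, ENNReal.ofReal (exp (X ω)) ∂μ := by
          rw [← lintegral_const_mul' _ _ ENNReal.ofReal_ne_top]
          simp only [← ENNReal.ofReal_mul (exp_pos _).le, ← exp_add, neg_add_eq_sub]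
      _ ≤ ENNReal.ofReal (exp (-K)) * ENNReal.ofReal (exp K) := by gcongr
      _ = 1 := by rw [← ENNReal.ofReal_mul (exp_pos _).le, ← exp_add]; simp
  have lintegral_le : ∫⁻ ω, ENNReal.ofReal (X ω ^ q) ∂μ ≤
      ENNReal.ofReal (2 * exp 1 * (q * K) ^ q) := by
    calc ∫⁻ ω, ENNReal.ofReal (X ω ^ q) ∂μ
        ≤ ∫⁻ ω, ENNReal.ofReal ((q * K) ^ q * exp 1) * (1 + ENNReal.ofReal (exp (X ω - K))) ∂μ :=
          lintegral_mono fun ω => by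
            rw [← ENNReal.ofReal_one, ← ENNReal.ofReal_add zero_le_one (exp_pos _).le,
              ← ENNReal.ofReal_mul (by positivity)]
            exact ENNReal.ofReal_le_ofReal (rpow_le_mul_one_add_exp_sub hq (hX ω) hK)
      _ ≤ ENNReal.ofReal ((q * K) ^ q * exp 1) * (1 + 1) := by
          rw [lintegral_const_mul' _ _ ENNReal.ofReal_ne_top, lintegral_add_left measurable_const,
            lintegral_const, measure_univ, one_mul]
          gcongr
      _ = ENNReal.ofReal (2 * exp 1 * (q * K) ^ q) := by
          rw [one_add_one_eq_two, ← ENNReal.ofReal_ofNat, ← ENNReal.ofReal_mul (by positivity)]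
          ring_nf
  have norm_rpow (ω : Ω) : ‖X ω ^ q‖ = X ω ^ q := norm_of_nonneg (rpow_nonneg (hX ω) q)
  calc ∫ ω, X ω ^ q ∂μ ≤ (∫⁻ ω, ENNReal.ofReal ‖X ω ^ q‖ ∂μ).toReal :=
        (le_norm_self _).trans (norm_integral_le_lintegral_norm _)
    _ ≤ 2 * exp 1 * (q * K) ^ q := by
        simp only [norm_rpow]
        exact ENNReal.toReal_le_of_le_ofReal (by positivity) lintegral_le

end MomentsOfExponentialMoment

/-- For every `p > 0` there is `C_p > 0` such that for every `N ≥ 2` and Haar-distributed `U`,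
`𝔼[(max_{1 ≤ k ≤ N} |𝒩_{2πk/N} − k|)^{2p}] ≤ C_p (log N)^{2p}`. -/
theorem max_deviation_moment_bound :
    ∀ p : ℝ, 0 < p → ∃ C : ℝ, 0 < C ∧ ∀ N : ℕ, 2 ≤ N →
      ∀ ℙ : Measure (Matrix.unitaryGroup (Fin N) ℂ),
        IsProbabilityMeasure ℙ → ℙ.IsHaarMeasure →
          ∫ U, maxDev N U ^ (2 * p) ∂ℙ ≤ C * Real.log N ^ (2 * p) := by
  intro p hp
  refine ⟨2 * exp 1 * (2 * p * 93) ^ (2 * p), by positivity, fun N hN ℙ _ _ => ?_⟩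
  have one_le_log : 1 ≤ 93 * log N := by
    have := log_le_log two_pos (show (2 : ℝ) ≤ N by exact_mod_cast hN)
    linarith [log_two_gt_d9]
  calc ∫ U, maxDev N U ^ (2 * p) ∂ℙ
      ≤ 2 * exp 1 * (2 * p * (93 * log N)) ^ (2 * p) :=
        integral_rpow_le_of_lintegral_exp_le maxDev_nonneg (by positivity) one_le_log
          (lintegral_exp_maxDev_le_exp_log hN ℙ)
    _ = 2 * exp 1 * (2 * p * 93) ^ (2 * p) * log N ^ (2 * p) := by
        rw [← mul_assoc (2 * p), mul_rpow (by positivity) (by positivity), mul_assoc (2 * exp 1)]
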